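/- arXiv:2110.10055 — 7 statements merged into one kernel-verified Lean document; each statement's English description precedes it below -/
import Mathlib

section
/- Let α be an alphabet and let M be a deterministic finite automaton over α whose state type Q is finite. Let u and v be words over α. If there exists m ≥ 1 such that the word u ++ v^m is accepted by M, then there exists n with 1 ≤ n ≤ |Q| (the number of states of M) such that u ++ v^n is accepted by M. -/
/-- Every point reached from `q` by iterating a self-map of a finite type at least once
is reached after at least one and at most `Fintype.card Q` steps. -/
theorem exists_iterate_eq_of_pos {Q : Type*} [Fintype Q] (f : Q → Q) (q : Q) (m : ℕ)
    (hm : 1 ≤ m) : ∃ n : ℕ, 1 ≤ n ∧ n ≤ Fintype.card Q ∧ f^[n] q = f^[m] q := by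
  induction m using Nat.strong_induction_on with
  | _ m ih =>
    rcases le_or_gt m (Fintype.card Q) with hle | hlt
    · exact ⟨m, hm, hle, rfl⟩
    · obtain ⟨i, j, hij, heq⟩ : ∃ i j : Fin m, i < j ∧ f^[i + 1] q = f^[j + 1] q := by
        obtain ⟨i, j, hne, heq⟩ := Fintype.exists_ne_map_eq_of_card_lt
          (fun i : Fin m => f^[i + 1] q) (by simpa using hlt)
        rcases lt_or_gt_of_ne hne with hij | hji
        · exact ⟨i, j, hij, heq⟩
        · exact ⟨j, i, hji, heq.symm⟩
      have hij' : (i : ℕ) < j := hij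
      have hj := j.isLt
      obtain ⟨n, hn, hcard, hnq⟩ := ih (m - (j + 1) + (i + 1)) (by omega) (by omega)
      refine ⟨n, hn, hcard, hnq.trans ?_⟩
      rw [Function.iterate_add_apply, heq, ← Function.iterate_add_apply,
        Nat.sub_add_cancel (by omega)]

theorem DFA.evalFrom_flatten_replicate {α Q : Type*} (M : DFA α Q) (v : List α) (n : ℕ) (q : Q) :
    M.evalFrom q (List.replicate n v).flatten = (fun s => M.evalFrom s v)^[n] q := by
  induction n generalizing q with
  | zero => simp
  | succ n ih =>
    rw [List.replicate_succ, List.flatten_cons, M.evalFrom_of_append, ih,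
      Function.iterate_succ_apply]

/-- Power-pump lemma for DFAs: if `u ++ v^m` is accepted for some `m ≥ 1`,
then `u ++ v^n` is accepted for some `n` with `1 ≤ n ≤ |Q|`. -/
theorem dfa_power_pump {α Q : Type*} [Fintype Q] (M : DFA α Q) (u v : List α)
    (h : ∃ m : ℕ, 1 ≤ m ∧ u ++ (List.replicate m v).flatten ∈ M.accepts) :
    ∃ n : ℕ, 1 ≤ n ∧ n ≤ Fintype.card Q ∧ u ++ (List.replicate n v).flatten ∈ M.accepts := by
  obtain ⟨m, hm, hacc⟩ := h
  obtain ⟨n, hn, hcard, heq⟩ :=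
    exists_iterate_eq_of_pos (fun s => M.evalFrom s v) (M.eval u) m hm
  refine ⟨n, hn, hcard, ?_⟩
  rw [DFA.mem_accepts, DFA.eval, M.evalFrom_of_append, M.evalFrom_flatten_replicate] at hacc ⊢
  exact heq ▸ hacc
end

section
/- Let M be a deterministic finite automaton over an alphabet α with finite state type Q and with accepting state set F, and let u and v be words over α. Then there exist natural numbers N and p with 1 ≤ p and N + p ≤ |Q|, and a set R of residues with R ⊆ {0, 1, …, p−1} and |R| ≤ |F|, such that for every m ≥ N, the word u ++ v^m is accepted by M if and only if (m mod p) ∈ R. -/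
open Function in
/-- On a finite type, the orbit of `x` under `f` enters a cycle after `N` steps, where `N` plus the
length of the cycle is at most the cardinality of the type. -/
theorem exists_add_minimalPeriod_iterate_le_card {Q : Type*} [Fintype Q] (f : Q → Q) (x : Q) :
    ∃ N : ℕ, 0 < minimalPeriod f (f^[N] x) ∧
      N + minimalPeriod f (f^[N] x) ≤ Fintype.card Q := by
  classical
  have hex : ∃ k, ∃ i < k, f^[i] x = f^[k] x := by
    obtain ⟨i, j, hne, h⟩ := Finite.exists_ne_map_eq_of_infinite fun n : ℕ => f^[n] x
    rcases hne.lt_or_gt with hlt | hlt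
    exacts [⟨j, i, hlt, h⟩, ⟨i, j, hlt, h.symm⟩]
  obtain ⟨N, hN, hNk⟩ := Nat.find_spec hex
  have hmin : ∀ j < Nat.find hex, ∀ i < j, f^[i] x ≠ f^[j] x := fun j hj i hi h =>
    Nat.find_min hex hj ⟨i, hi, h⟩
  generalize Nat.find hex = k at hN hNk hmin
  have hcard : k ≤ Fintype.card Q := by
    have hinj : Injective fun i : Fin k => f^[i] x := by
      intro i j h
      rcases lt_trichotomy i j with hij | hij | hij
      exacts [absurd h (hmin j j.2 i hij), hij, absurd h.symm (hmin i i.2 j hij)]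
    simpa using Fintype.card_le_of_injective _ hinj
  have hper : IsPeriodicPt f (k - N) (f^[N] x) := by
    rw [IsPeriodicPt, IsFixedPt, ← iterate_add_apply, Nat.sub_add_cancel hN.le, hNk]
  have hle := hper.minimalPeriod_le (Nat.sub_pos_of_lt hN)
  exact ⟨N, hper.minimalPeriod_pos (Nat.sub_pos_of_lt hN), by omega⟩

/-- Reading `v ^ m` after `u` iterates the transformation of the states induced by `v`. -/
theorem DFA.eval_append_flatten_replicate {α Q : Type*} (M : DFA α Q) (u v : List α) (m : ℕ) :
    M.eval (u ++ (List.replicate m v).flatten) = (fun q => M.evalFrom q v)^[m] (M.eval u) := by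
  rw [DFA.eval, DFA.evalFrom_of_append]
  generalize M.evalFrom M.start u = q
  induction m generalizing q with
  | zero => simp
  | succ m ih =>
    rw [List.replicate_succ, List.flatten_cons, DFA.evalFrom_of_append, ih,
      Function.iterate_succ_apply]

/-- The set of exponents `m` with `u ++ v^m` accepted by a DFA is eventually
periodic, with preperiod-plus-period at most `|Q|` and at most `|F|` accepted
residues per period. -/
theorem dfa_power_exponents_eventually_periodic {α Q : Type*} [Fintype Q]
    (M : DFA α Q) (u v : List α) :
    ∃ (N p : ℕ) (R : Finset ℕ), 1 ≤ p ∧ N + p ≤ Fintype.card Q ∧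
      (∀ r ∈ R, r < p) ∧ R.card ≤ M.accept.ncard ∧
      ∀ m : ℕ, N ≤ m →
        (u ++ (List.replicate m v).flatten ∈ M.accepts ↔ m % p ∈ R) := by
  classical
  simp only [DFA.mem_accepts, DFA.eval_append_flatten_replicate]
  generalize M.eval u = x
  generalize (fun q => M.evalFrom q v) = f
  obtain ⟨N, hp, hcard⟩ := exists_add_minimalPeriod_iterate_le_card f x
  set p := Function.minimalPeriod f (f^[N] x) with hp_def
  have hiter : ∀ a b, N ≤ a → N ≤ b → (f^[a] x = f^[b] x ↔ a ≡ b [MOD p]) := by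
    intro a b ha hb
    obtain ⟨a, rfl⟩ := Nat.exists_eq_add_of_le' ha
    obtain ⟨b, rfl⟩ := Nat.exists_eq_add_of_le' hb
    rw [Function.iterate_add_apply, Function.iterate_add_apply,
      ← Function.iterate_mod_minimalPeriod_eq (n := a),
      ← Function.iterate_mod_minimalPeriod_eq (n := b), ← hp_def,
      Function.iterate_eq_iterate_iff_of_lt_minimalPeriod (Nat.mod_lt _ hp) (Nat.mod_lt _ hp)]
    exact ⟨fun h => Nat.ModEq.add_right N h, fun h => Nat.ModEq.add_right_cancel' N h⟩
  have hN : ∀ r, N ≤ N * p + r := fun r =>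
    (Nat.le_mul_of_pos_right N hp).trans (Nat.le_add_right _ _)
  refine ⟨N, p, {r ∈ Finset.range p | f^[N * p + r] x ∈ M.accept}, hp, hcard, ?_, ?_, ?_⟩
  · intro r hr
    simpa using (Finset.mem_filter.1 hr).1
  · rw [← Set.ncard_coe_finset]
    refine Set.ncard_le_ncard_of_injOn (fun r => f^[N * p + r] x) ?_ ?_ (Set.toFinite _)
    · intro r hr
      exact (Finset.mem_filter.1 hr).2
    · intro r hr s hs h
      have hr' := Finset.mem_range.1 (Finset.mem_filter.1 hr).1
      have hs' := Finset.mem_range.1 (Finset.mem_filter.1 hs).1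
      exact (((hiter _ _ (hN r) (hN s)).1 h).add_left_cancel' _).eq_of_lt_of_lt hr' hs'
  · intro m hm
    have hmod : f^[m] x = f^[N * p + m % p] x :=
      (hiter _ _ hm (hN _)).2 (by simp [Nat.ModEq])
    simp [hmod, Nat.mod_lt m hp]
end

section
/- For all natural numbers a₁, d₁, a₂, d₂ and all finite sets F₁, F₂ of natural numbers, there exist a natural number a, a natural number d, and a finite set F of natural numbers such that {a₁ + d₁·i + f : i ∈ ℕ, f ∈ F₁} ∩ {a₂ + d₂·i + f : i ∈ ℕ, f ∈ F₂} = {a + d·i + f : i ∈ ℕ, f ∈ F}. -/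
/-- A set of naturals closed under adding `d`, and under subtracting `d > 0` from its elements
`≥ N`, is generated by its elements below `N`. -/
theorem exists_finset_eq_linear_of_descent (S : Set ℕ) (d N : ℕ)
    (hadd : ∀ n ∈ S, n + d ∈ S)
    (hsub : ∀ n ∈ S, N ≤ n → 0 < d ∧ ∃ m ∈ S, n = m + d) :
    ∃ F : Finset ℕ, S = {n : ℕ | ∃ i : ℕ, ∃ f ∈ F, n = 0 + d * i + f} := by
  classical
  refine ⟨(Finset.range N).filter (· ∈ S), Set.ext fun n => ⟨fun hn => ?_, ?_⟩⟩
  · induction n using Nat.strong_induction_on with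
    | _ n ih =>
      by_cases hN : n < N
      · exact ⟨0, n, by simp [hN, hn], by simp⟩
      · obtain ⟨hd, m, hm, rfl⟩ := hsub n hn (not_lt.mp hN)
        obtain ⟨i, f, hf, h⟩ := ih m (by omega) hm
        exact ⟨i + 1, f, hf, by rw [h]; ring⟩
  · rintro ⟨i, f, hf, rfl⟩
    have hfS : f ∈ S := (Finset.mem_filter.mp hf).2
    induction i with
    | zero => simpa using hfS
    | succ i ih =>
      convert hadd _ ih using 1
      ring

theorem linear_add_period {a d : ℕ} {F : Finset ℕ} (k : ℕ) {n : ℕ}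
    (hn : ∃ i : ℕ, ∃ f ∈ F, n = a + d * i + f) :
    ∃ i : ℕ, ∃ f ∈ F, n + d * k = a + d * i + f := by
  obtain ⟨i, f, hf, rfl⟩ := hn
  exact ⟨i + k, f, hf, by ring⟩

theorem linear_sub_period {a d : ℕ} {F : Finset ℕ} (k : ℕ) {n : ℕ}
    (hn : ∃ i : ℕ, ∃ f ∈ F, n = a + d * i + f) (hlt : a + F.sup id + d * k < n) :
    0 < d ∧ ∃ i : ℕ, ∃ f ∈ F, n - d * k = a + d * i + f := by
  obtain ⟨i, f, hf, rfl⟩ := hn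
  have hfsup : f ≤ F.sup id := Finset.le_sup (f := id) hf
  have hmul : d * k < d * i := by omega
  have hd : 0 < d := Nat.pos_of_ne_zero (by rintro rfl; simp at hmul)
  obtain ⟨j, rfl⟩ := Nat.exists_eq_add_of_lt (Nat.lt_of_mul_lt_mul_left hmul)
  refine ⟨hd, j + 1, f, hf, ?_⟩
  rw [Nat.sub_eq_iff_eq_add (by omega)]
  ring

/-- Linear subsets of ℕ of the form `{a + d·i + f : i ∈ ℕ, f ∈ F}` (with `F` a
finite set) are closed under intersection. -/
theorem linear_sets_inter (a₁ d₁ a₂ d₂ : ℕ) (F₁ F₂ : Finset ℕ) :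
    ∃ (a d : ℕ) (F : Finset ℕ),
      {n : ℕ | ∃ i : ℕ, ∃ f ∈ F₁, n = a₁ + d₁ * i + f} ∩
        {n : ℕ | ∃ i : ℕ, ∃ f ∈ F₂, n = a₂ + d₂ * i + f} =
      {n : ℕ | ∃ i : ℕ, ∃ f ∈ F, n = a + d * i + f} := by
  refine ⟨0, d₁ * d₂, exists_finset_eq_linear_of_descent _ _
    (a₁ + F₁.sup id + (a₂ + F₂.sup id) + d₁ * d₂ + 1) ?_ ?_⟩
  · rintro n ⟨h₁, h₂⟩
    exact ⟨linear_add_period d₂ h₁, mul_comm d₁ d₂ ▸ linear_add_period d₁ h₂⟩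
  · rintro n ⟨h₁, h₂⟩ hn
    obtain ⟨hd₁, h₁'⟩ := linear_sub_period d₂ h₁ (by omega)
    obtain ⟨hd₂, h₂'⟩ := linear_sub_period d₁ h₂ (by rw [mul_comm d₂ d₁]; omega)
    rw [mul_comm d₂ d₁] at h₂'
    exact ⟨Nat.mul_pos hd₁ hd₂, n - d₁ * d₂, ⟨h₁', h₂'⟩, by omega⟩
end

section
/- Let α be a type with decidable equality, let X and W be lists over α, and let i be a natural number with i < W.length. Define S = {j : ℕ | j ≤ i ∧ i < j + X.length ∧ j + X.length ≤ W.length ∧ (W.drop j).take X.length = X}, the set of starting positions of occurrences of X in W that contain the position i. If S is nonempty, then there exist natural numbers d, k, l such that S = {l + t·d : t ∈ {0, 1, …, k}}, i.e. S is an arithmetic progression. -/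
/-- A nonempty bounded set of naturals is an arithmetic progression as soon as, for any three of its
elements, reflecting an outer element of the closer pair through the middle one stays in the set. -/
theorem exists_eq_arith_progression_of_reflect_mem {S : Set ℕ} (hne : S.Nonempty)
    (hbdd : BddAbove S)
    (hright : ∀ a b c, a ∈ S → b ∈ S → c ∈ S → a < b → b - a < c - b → b + (b - a) ∈ S)
    (hleft : ∀ a b c, a ∈ S → b ∈ S → c ∈ S → b < c → c - b < b - a → b - (c - b) ∈ S) :
    ∃ d k l : ℕ, S = {n : ℕ | ∃ t : ℕ, t ≤ k ∧ n = l + t * d} := by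
  classical
  obtain ⟨l, hl, hlmin⟩ : ∃ l ∈ S, ∀ x ∈ S, l ≤ x :=
    ⟨sInf S, Nat.sInf_mem hne, fun x hx => Nat.sInf_le hx⟩
  obtain ⟨m, hm, hmmax⟩ : ∃ m ∈ S, ∀ x ∈ S, x ≤ m :=
    ⟨sSup S, Nat.sSup_mem hne hbdd, fun x hx => le_csSup hbdd hx⟩
  by_cases hlm : m = l
  · refine ⟨0, 0, l, Set.ext fun x => ⟨fun hx => ⟨0, le_rfl, ?_⟩, ?_⟩⟩
    · have := hlmin x hx
      have := hmmax x hx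
      omega
    · rintro ⟨t, -, rfl⟩
      simpa using hl
  have hlm' : l < m := lt_of_le_of_ne (hlmin m hm) (Ne.symm hlm)
  have hex : ∃ d, 0 < d ∧ l + d ∈ S :=
    ⟨m - l, by omega, by rwa [Nat.add_sub_cancel' hlm'.le]⟩
  obtain ⟨d, ⟨hd, hld⟩, hdmin⟩ :
      ∃ d, (0 < d ∧ l + d ∈ S) ∧ ∀ e, 0 < e → l + e ∈ S → d ≤ e :=
    ⟨Nat.find hex, Nat.find_spec hex, fun e he hle => Nat.find_min' hex ⟨he, hle⟩⟩
  have key : ∀ z, l + z ≤ m → (l + z ∈ S ↔ d ∣ z) := by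
    intro z
    induction z using Nat.strong_induction_on with
    | _ z ih =>
      intro hz
      rcases Nat.eq_zero_or_pos z with rfl | hz0
      · simpa using hl
      rcases lt_trichotomy z d with hzd | rfl | hzd
      · refine ⟨fun h => ?_, fun h => ?_⟩
        · have := hdmin z hz0 h
          omega
        · have := Nat.le_of_dvd hz0 h
          omega
      · simpa using hld
      · -- `d * (q + 1)` is the last multiple of `d` before `z`
        obtain ⟨q, hq1, hq2⟩ : ∃ q, d * q + d < z ∧ z ≤ d * q + d + d := by
          refine ⟨(z - 1) / d - 1, ?_⟩
          have h1 := Nat.div_add_mod (z - 1) d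
          have h2 := Nat.mod_lt (z - 1) hd
          have h3 : 1 ≤ (z - 1) / d := (Nat.one_le_div_iff hd).2 (by omega)
          obtain ⟨r, hr⟩ := Nat.exists_eq_add_of_le' h3
          rw [hr] at h1 ⊢
          simp only [Nat.add_sub_cancel, mul_add, mul_one] at h1 ⊢
          omega
        have hdq : d ∣ d * q := dvd_mul_right d q
        have hdq' : d ∣ d * q + d := (Nat.dvd_add_self_right).2 hdq
        have ha : l + d * q ∈ S := (ih _ (by omega) (by omega)).2 hdq
        have hb : l + (d * q + d) ∈ S := (ih _ hq1 (by omega)).2 hdq'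
        rcases hq2.lt_or_eq with hlt | heq
        · refine ⟨fun h => ?_, fun h => ?_⟩
          · have hmem := hleft _ _ _ ha hb h (by omega) (by omega)
            have e : l + (d * q + d) - (l + z - (l + (d * q + d)))
                = l + (d * q + (d * q + d + d - z)) := by omega
            rw [e, ih _ (by omega) (by omega), Nat.dvd_add_right hdq] at hmem
            have := Nat.le_of_dvd (by omega) hmem
            omega
          · have h' : d ∣ z - (d * q + d) := Nat.dvd_sub h hdq'
            have := Nat.le_of_dvd (by omega) h'
            omega
        · refine ⟨fun _ => heq ▸ (Nat.dvd_add_self_right).2 hdq', fun _ => ?_⟩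
          rcases hz.lt_or_eq with hzm | hzm
          · have hmem := hright _ _ _ ha hb hm (by omega) (by omega)
            convert hmem using 1
            omega
          · rwa [hzm]
  refine ⟨d, (m - l) / d, l, Set.ext fun x => ⟨fun hx => ?_, ?_⟩⟩
  · have h1 := hlmin x hx
    have h2 := hmmax x hx
    obtain ⟨t, ht⟩ := (key (x - l) (by omega)).1 (by rwa [Nat.add_sub_cancel' h1])
    have hxt : x = l + t * d := by
      rw [mul_comm t d]
      omega
    exact ⟨t, (Nat.le_div_iff_mul_le hd).2 (by omega), hxt⟩
  · rintro ⟨t, ht, rfl⟩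
    have := (Nat.le_div_iff_mul_le hd).1 ht
    exact (key _ (by omega)).2 (dvd_mul_left d t)

/-- `X` occurs in `W` at position `j` iff the two lists agree letter by letter there. -/
theorem List.take_drop_eq_iff_getElem? {α : Type*} {X W : List α} {j : ℕ} :
    (W.drop j).take X.length = X ↔ ∀ t < X.length, W[j + t]? = X[t]? := by
  refine ⟨fun h t ht => ?_, fun h => List.ext_getElem? fun t => ?_⟩
  · conv_rhs => rw [← h]
    simp [ht]
  · by_cases ht : t < X.length
    · simp [ht, h t ht]
    · simp [ht]

section Occurrences

variable {β : Type*} {x w : ℕ → β} {n a b c : ℕ}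

/-- If `x` occurs at `a < b < c`, all overlapping, and the gap `b - a` is smaller than `c - b`,
then `x` also occurs at the reflection of `a` through `b`. -/
theorem occurrence_reflect_right (hab : a < b) (hgap : b - a < c - b) (hca : c < a + n)
    (ha : ∀ t < n, w (a + t) = x t) (hb : ∀ t < n, w (b + t) = x t)
    (hc : ∀ t < n, w (c + t) = x t) : ∀ t < n, w (b + (b - a) + t) = x t := by
  obtain ⟨p, rfl⟩ := Nat.exists_eq_add_of_le hab.le
  obtain ⟨q, rfl⟩ := Nat.exists_eq_add_of_le (show a + p ≤ c by omega)
  have hp : ∀ t, p + t < n → x (p + t) = x t := fun t ht => by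
    rw [← ha _ ht, ← hb t (by omega), add_assoc]
  have hq : ∀ t, q + t < n → x (q + t) = x t := fun t ht => by
    rw [← hb _ ht, ← hc t (by omega), add_assoc (a + p)]
  intro t ht
  by_cases h : p + t < n
  · rw [← hp t h, ← hb _ h]
    congr 1
    omega
  · obtain ⟨s, rfl⟩ := Nat.exists_eq_add_of_le (show q ≤ t by omega)
    rw [hq s ht, ← hp s (by omega), ← hc _ (by omega)]
    congr 1
    omega

/-- If `x` occurs at `a < b < c`, all overlapping, and the gap `c - b` is smaller than `b - a`,
then `x` also occurs at the reflection of `c` through `b`. -/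
theorem occurrence_reflect_left (hbc : b < c) (hgap : c - b < b - a) (hca : c < a + n)
    (ha : ∀ t < n, w (a + t) = x t) (hb : ∀ t < n, w (b + t) = x t)
    (hc : ∀ t < n, w (c + t) = x t) : ∀ t < n, w (b - (c - b) + t) = x t := by
  obtain ⟨p, rfl⟩ := Nat.exists_eq_add_of_le (show a ≤ b by omega)
  obtain ⟨q, rfl⟩ := Nat.exists_eq_add_of_le hbc.le
  have hp : ∀ t, p + t < n → x (p + t) = x t := fun t ht => by
    rw [← ha _ ht, ← hb t (by omega), add_assoc]
  have hq : ∀ t, q + t < n → x (q + t) = x t := fun t ht => by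
    rw [← hb _ ht, ← hc t (by omega), add_assoc (a + p)]
  intro t ht
  by_cases h : q ≤ t
  · obtain ⟨s, rfl⟩ := Nat.exists_eq_add_of_le h
    rw [hq s ht, ← hb s (by omega)]
    congr 1
    omega
  · have e : p + t = q + (p - q + t) := by omega
    rw [← hp t (by omega), e, hq _ (by omega), ← ha _ (by omega)]
    congr 1
    omega

end Occurrences

/-- Crossing appearances: the set of starting positions of occurrences of `X`
in `W` containing a fixed position `i` is an arithmetic progression. -/
theorem crossing_occurrences_arith_progression {α : Type*} [DecidableEq α]
    (X W : List α) (i : ℕ) (hi : i < W.length)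
    (hne : {j : ℕ | j ≤ i ∧ i < j + X.length ∧ j + X.length ≤ W.length ∧
        (W.drop j).take X.length = X}.Nonempty) :
    ∃ d k l : ℕ,
      {j : ℕ | j ≤ i ∧ i < j + X.length ∧ j + X.length ≤ W.length ∧
        (W.drop j).take X.length = X} =
      {n : ℕ | ∃ t : ℕ, t ≤ k ∧ n = l + t * d} := by
  refine exists_eq_arith_progression_of_reflect_mem hne ⟨i, fun j hj => hj.1⟩ ?_ ?_
  · rintro a b c ⟨ha1, ha2, ha3, ha⟩ ⟨hb1, hb2, hb3, hb⟩ ⟨hc1, hc2, hc3, hc⟩ hab hgap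
    refine ⟨by omega, by omega, by omega, List.take_drop_eq_iff_getElem?.2 ?_⟩
    exact occurrence_reflect_right (x := fun t => X[t]?) (w := fun t => W[t]?) hab hgap (by omega)
      (List.take_drop_eq_iff_getElem?.1 ha) (List.take_drop_eq_iff_getElem?.1 hb)
      (List.take_drop_eq_iff_getElem?.1 hc)
  · rintro a b c ⟨ha1, ha2, ha3, ha⟩ ⟨hb1, hb2, hb3, hb⟩ ⟨hc1, hc2, hc3, hc⟩ hbc hgap
    refine ⟨by omega, by omega, by omega, List.take_drop_eq_iff_getElem?.2 ?_⟩
    exact occurrence_reflect_left (x := fun t => X[t]?) (w := fun t => W[t]?) hbc hgap (by omega)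
      (List.take_drop_eq_iff_getElem?.1 ha) (List.take_drop_eq_iff_getElem?.1 hb)
      (List.take_drop_eq_iff_getElem?.1 hc)
end

section
/- Let V and E be finite types, let s, t : E → V, and let ι : E → E be an involution (ι ∘ ι = id) satisfying s(ι e) = t e and t(ι e) = s e for all e ∈ E (a finite directed multigraph with an orientation-reversing involution on edges). For v ∈ V set indeg v = |{e : t e = v}| and outdeg v = |{e : s e = v}|, let q₀ ∈ V, let F be a finite set of vertices, and let ∂ = {v : indeg v = 1 ∧ outdeg v = 1}. Assume that every vertex has outdeg ≥ 1, and that every vertex v with v ≠ q₀ and v ∉ F satisfies indeg v ≥ 3 or outdeg v ≥ 3. Then |E| ≤ 3·max(0, |E| − 2·|V|) + 2·|F| + 2·|∂| + 2 and |V| ≤ max(0, |E| − 2·|V|) + |F| + |∂| + 1. -/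
/-- Counting lemma for minimalistic involutive graphs (Lemma 5.6):
bounds on the numbers of edges and vertices. -/
theorem minimalistic_involutive_graph_bounds
    {V E : Type*} [Fintype V] [Fintype E] [DecidableEq V]
    (s t : E → V) (ι : E → E)
    (hinv : ∀ e, ι (ι e) = e)
    (hs : ∀ e, s (ι e) = t e) (ht : ∀ e, t (ι e) = s e)
    (q₀ : V) (F : Finset V)
    (hout : ∀ v : V, 1 ≤ (Finset.univ.filter fun e => s e = v).card)
    (hmin : ∀ v : V, v ≠ q₀ → v ∉ F →
      3 ≤ (Finset.univ.filter fun e => t e = v).card ∨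
      3 ≤ (Finset.univ.filter fun e => s e = v).card) :
    (Fintype.card E : ℤ) ≤
        3 * max 0 ((Fintype.card E : ℤ) - 2 * Fintype.card V) + 2 * F.card +
          2 * (Finset.univ.filter fun v : V =>
            (Finset.univ.filter fun e => t e = v).card = 1 ∧
            (Finset.univ.filter fun e => s e = v).card = 1).card + 2 ∧
    (Fintype.card V : ℤ) ≤
        max 0 ((Fintype.card E : ℤ) - 2 * Fintype.card V) + F.card +
          (Finset.univ.filter fun v : V =>
            (Finset.univ.filter fun e => t e = v).card = 1 ∧
            (Finset.univ.filter fun e => s e = v).card = 1).card + 1 := by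
  have hdeg : ∀ v : V, (Finset.univ.filter fun e => t e = v).card =
      (Finset.univ.filter fun e => s e = v).card := fun v =>
    Finset.card_bij' (fun e _ => ι e) (fun e _ => ι e)
      (by simp [hs]) (by simp [ht]) (by simp [hinv]) (by simp [hinv])
  simp only [hdeg, and_self, or_self] at hmin ⊢
  set d : V → ℕ := fun v => (Finset.univ.filter fun e => s e = v).card
  have hsum : (Fintype.card E : ℤ) = ∑ v, (d v : ℤ) := by
    exact_mod_cast Finset.card_eq_sum_card_fiberwise (f := s) (s := Finset.univ)
      (t := Finset.univ) (by simp)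
  have hlocal : ∀ v : V, (3 : ℤ) ≤
      d v + (if v ∈ insert q₀ F then 1 else 0) + (if d v = 1 then 1 else 0) := by
    intro v
    have h1 : 1 ≤ d v := hout v
    by_cases hv : v ∈ insert q₀ F
    · simp only [hv, if_true]
      split_ifs <;> omega
    · have h3 : 3 ≤ d v := hmin v (by grind) (by grind)
      split_ifs <;> omega
  have htotal := Finset.sum_le_sum fun v (_ : v ∈ Finset.univ) => hlocal v
  have hS : ((insert q₀ F).card : ℤ) ≤ F.card + 1 := by
    exact_mod_cast Finset.card_insert_le q₀ F
  simp only [Finset.sum_add_distrib, ← hsum, Finset.sum_boole, Finset.sum_const,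
    Finset.card_univ, nsmul_eq_mul, Finset.filter_univ_mem] at htotal
  have hmax := le_max_right 0 ((Fintype.card E : ℤ) - 2 * Fintype.card V)
  constructor <;> linarith
end

section
/- Let α be a finite type with decidable equality and let S be a finite subset of the free group FreeGroup α; let H be the subgroup of FreeGroup α generated by S. Then there exist a finite type Q and a deterministic finite automaton M over the alphabet α × Bool with state type Q such that the language accepted by M equals {w : List (α × Bool) | FreeGroup.reduce w = w ∧ FreeGroup.mk w ∈ H}, the set of freely reduced words representing elements of H. -/
namespace FreeGroup

variable {α : Type*}

/-- Every prefix of `w` spells an element of a right coset `H * b` with `b ∈ B`. -/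
def PrefixesIn (H : Subgroup (FreeGroup α)) (B : Set (FreeGroup α)) (w : List (α × Bool)) : Prop :=
  ∀ p, p <+: w → ∃ b ∈ B, mk p * b⁻¹ ∈ H

namespace PrefixesIn

variable {H : Subgroup (FreeGroup α)} {B : Set (FreeGroup α)} {v w : List (α × Bool)}

theorem nil (hB : 1 ∈ B) : PrefixesIn H B [] := by
  intro p hp
  obtain rfl := List.prefix_nil.mp hp
  exact ⟨1, hB, by simp [← one_eq_mk]⟩

theorem append (hv : PrefixesIn H B v) (hvH : mk v ∈ H) (hw : PrefixesIn H B w) :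
    PrefixesIn H B (v ++ w) := by
  intro p hp
  rcases List.prefix_or_prefix_of_prefix hp (List.prefix_append v _) with h | ⟨q, rfl⟩
  · exact hv p h
  · have hq := (List.prefix_append_right_inj _).mp hp
    obtain ⟨b, hb, hbH⟩ := hw q hq
    refine ⟨b, hb, ?_⟩
    rw [← mul_mk, mul_assoc]
    exact H.mul_mem hvH hbH

theorem invRev (hw : PrefixesIn H B w) (hwH : mk w ∈ H) : PrefixesIn H B (invRev w) := by
  rintro p ⟨q, hq⟩
  have hw' : FreeGroup.invRev q ++ FreeGroup.invRev p = w := by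
    rw [← invRev_append, hq, invRev_invRev]
  obtain ⟨b, hb, hbH⟩ := hw (FreeGroup.invRev q) ⟨_, hw'⟩
  refine ⟨b, hb, ?_⟩
  have hp : mk p = (mk w)⁻¹ * mk (FreeGroup.invRev q) := by
    rw [← hw', ← mul_mk, ← inv_mk, ← inv_mk]
    group
  rw [hp, mul_assoc]
  exact H.mul_mem (H.inv_mem hwH) hbH

theorem of_step (hv : PrefixesIn H B v) (h : Red.Step v w) : PrefixesIn H B w := by
  cases h with
  | @not L₁ L₂ x b =>
    intro p hp
    rcases List.prefix_or_prefix_of_prefix hp (List.prefix_append L₁ _) with h | ⟨q, rfl⟩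
    · exact hv p (h.trans (List.prefix_append _ _))
    · have hq := (List.prefix_append_right_inj _).mp hp
      obtain ⟨c, hc, hcH⟩ := hv (L₁ ++ (x, b) :: (x, !b) :: q) (by simpa using hq)
      refine ⟨c, hc, ?_⟩
      have hmk : mk (L₁ ++ (x, b) :: (x, !b) :: q) = mk (L₁ ++ q) := Quot.sound Red.Step.not
      rwa [hmk] at hcH

theorem of_red (hv : PrefixesIn H B v) (h : Red v w) : PrefixesIn H B w := by
  induction h with
  | refl => exact hv
  | tail _ h ih => exact ih.of_step h

end PrefixesIn

variable [DecidableEq α]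

theorem exists_finite_prefixesIn_toWord (S : Finset (FreeGroup α)) :
    ∃ B : Set (FreeGroup α), B.Finite ∧
      ∀ h ∈ Subgroup.closure (S : Set (FreeGroup α)),
        PrefixesIn (Subgroup.closure (S : Set (FreeGroup α))) B h.toWord := by
  refine ⟨insert 1 (⋃ s ∈ S, Set.image mk {p | p ∈ s.toWord.inits}), ?_, fun h hh ↦ ?_⟩
  · exact (S.finite_toSet.biUnion fun s _ ↦ (List.finite_toSet _).image _).insert 1
  · induction hh using Subgroup.closure_induction with
    | mem s hs =>
      intro p hp
      refine ⟨mk p, Or.inr ?_, by rw [mul_inv_cancel]; exact one_mem _⟩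
      simp only [Set.mem_iUnion]
      exact ⟨s, hs, p, (List.mem_inits _ _).mpr hp, rfl⟩
    | one => simpa using PrefixesIn.nil (Set.mem_insert _ _)
    | mul x y hx _ ihx ihy =>
      rw [toWord_mul]
      exact (ihx.append (by rwa [mk_toWord]) ihy).of_red reduce.red
    | inv x hx ih =>
      rw [toWord_inv]
      exact ih.invRev (by rwa [mk_toWord])

/-- The reduced words of elements of a finitely generated subgroup form a regular language. -/
theorem isRegular_reduced_mem_closure [Finite α] (S : Finset (FreeGroup α)) :
    Language.IsRegular {w : List (α × Bool) | reduce w = w ∧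
      mk w ∈ Subgroup.closure (S : Set (FreeGroup α))} := by
  obtain ⟨B, hB, hBS⟩ := exists_finite_prefixesIn_toWord S
  set H := Subgroup.closure (S : Set (FreeGroup α))
  -- A nonempty left quotient by `x` depends only on the coset of `x` and its last letter.
  let F : FreeGroup α × Option (α × Bool) → Language (α × Bool) := fun c ↦
    {y | (IsReduced y ∧ ∀ a ∈ c.2, ∀ b ∈ y.head?, a.1 = b.1 → a.2 = b.2) ∧ c.1 * mk y ∈ H}
  refine Language.IsRegular.of_finite_range_leftQuotient
    ((((hB.prod Set.finite_univ).image F).insert 0).subset ?_)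
  rintro _ ⟨x, rfl⟩
  rcases Set.eq_empty_or_nonempty (Language.leftQuotient {w : List (α × Bool) | reduce w = w ∧
      mk w ∈ H} x) with h | ⟨z, hz, hzH⟩
  · exact Or.inl h
  obtain ⟨b, hb, hbH⟩ := hBS _ hzH x (by rw [toWord_mk, hz]; exact List.prefix_append _ _)
  have hx : IsReduced x :=
    (isReduced_iff_reduce_eq.mpr hz).infix (List.prefix_append _ _).isInfix
  refine Or.inr ⟨(b, x.getLast?), ⟨hb, Set.mem_univ _⟩, Set.ext fun y ↦ and_congr ?_ ?_⟩
  · rw [← isReduced_iff_reduce_eq]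
    exact ⟨fun h ↦ List.isChain_append.mpr ⟨hx, h⟩, fun h ↦ (List.isChain_append.mp h).2⟩
  · rw [← mul_mk, ← H.mul_mem_cancel_left hbH]
    simp [mul_assoc]

end FreeGroup


/-- Stallings automata: every finitely generated subgroup of a free group has a
finite deterministic automaton recognising exactly the freely reduced words of
its elements. -/
theorem exists_stallings_automaton {α : Type*} [Fintype α] [DecidableEq α]
    (S : Finset (FreeGroup α)) :
    ∃ (Q : Type) (_ : Fintype Q) (M : DFA (α × Bool) Q),
      M.accepts = {w : List (α × Bool) | FreeGroup.reduce w = w ∧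
        FreeGroup.mk w ∈ Subgroup.closure (S : Set (FreeGroup α))} :=
  FreeGroup.isRegular_reduced_mem_closure S
end

section
/- Let α be a finite type with decidable equality and let N be a nondeterministic finite automaton over the alphabet α × Bool with finite state type, whose transition relation is involutive in the sense that for all states p, q, all a : α and all b : Bool, q ∈ N.step p (a, b) if and only if p ∈ N.step q (a, !b). Then there exist a finite type Q and a deterministic finite automaton M over α × Bool with state type Q such that every word accepted by M is freely reduced (FreeGroup.reduce w = w) and such that the image under FreeGroup.mk of the language of M equals the image under FreeGroup.mk of the language of N. -/
/-- The freely reduced words obtained from the words of a language by free reduction. -/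
def Language.freeReduction {α : Type*} (L : Language (α × Bool)) : Language (α × Bool) :=
  {w | FreeGroup.IsReduced w ∧ ∃ v ∈ L, FreeGroup.Red v w}

theorem Language.mem_freeReduction {α : Type*} {L : Language (α × Bool)} {w : List (α × Bool)} :
    w ∈ L.freeReduction ↔ FreeGroup.IsReduced w ∧ ∃ v ∈ L, FreeGroup.Red v w :=
  Iff.rfl

theorem Language.reduce_eq_of_mem_freeReduction {α : Type*} [DecidableEq α]
    {L : Language (α × Bool)} {w : List (α × Bool)} (hw : w ∈ L.freeReduction) :
    FreeGroup.reduce w = w :=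
  hw.1.reduce_eq

theorem Language.mk_image_freeReduction {α : Type*} (L : Language (α × Bool)) :
    FreeGroup.mk '' L.freeReduction = FreeGroup.mk '' L := by
  classical
  ext g
  constructor
  · rintro ⟨w, ⟨-, v, hv, hred⟩, rfl⟩
    exact ⟨v, hv, FreeGroup.Red.exact.mpr ⟨w, hred, .refl⟩⟩
  · rintro ⟨v, hv, rfl⟩
    exact ⟨FreeGroup.reduce v,
      ⟨FreeGroup.isReduced_iff_reduce_eq.mpr FreeGroup.reduce.idem, v, hv, FreeGroup.reduce.red⟩,
      FreeGroup.reduce.self⟩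

theorem Language.append_mem_freeReduction_iff {α : Type*} {L : Language (α × Bool)}
    {x y : List (α × Bool)} :
    x ++ y ∈ L.freeReduction ↔
      FreeGroup.IsReduced x ∧ FreeGroup.IsReduced y ∧
      (∀ a ∈ x.getLast?, ∀ b ∈ y.head?, a.1 = b.1 → a.2 = b.2) ∧
      ∃ K ∈ L.leftQuotient '' {u | FreeGroup.Red u x}, ∃ v ∈ K, FreeGroup.Red v y := by
  rw [Language.mem_freeReduction, FreeGroup.IsReduced, List.isChain_append]
  simp only [FreeGroup.IsReduced, and_assoc, Set.exists_mem_image, Set.mem_ofPred_eq,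
    Language.mem_leftQuotient]
  refine and_congr_right fun _ => and_congr_right fun _ => and_congr_right fun _ => ?_
  constructor
  · rintro ⟨v, hv, hred⟩
    obtain ⟨v₁, v₂, rfl, h₁, h₂⟩ := FreeGroup.Red.to_append_iff.mp hred
    exact ⟨v₁, h₁, v₂, hv, h₂⟩
  · rintro ⟨v₁, h₁, v₂, hv, h₂⟩
    exact ⟨v₁ ++ v₂, hv, h₁.append_append h₂⟩

/-- **Benois' theorem**: over a finite alphabet, free reduction preserves regularity. -/
theorem Language.IsRegular.freeReduction {α : Type*} [Finite α] {L : Language (α × Bool)}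
    (hL : L.IsRegular) : L.freeReduction.IsRegular := by
  let summary (x : List (α × Bool)) : Prop × Option (α × Bool) × Set (Language (α × Bool)) :=
    (FreeGroup.IsReduced x, x.getLast?, L.leftQuotient '' {u | FreeGroup.Red u x})
  let quotientOf (t : Prop × Option (α × Bool) × Set (Language (α × Bool))) :
      Language (α × Bool) :=
    {y | t.1 ∧ FreeGroup.IsReduced y ∧
      (∀ a ∈ t.2.1, ∀ b ∈ y.head?, a.1 = b.1 → a.2 = b.2) ∧
      ∃ K ∈ t.2.2, ∃ v ∈ K, FreeGroup.Red v y}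
  have hquot : L.freeReduction.leftQuotient = quotientOf ∘ summary := by
    ext x y
    exact Language.append_mem_freeReduction_iff
  have hsummary : (Set.range summary).Finite := by
    have hprod := (Set.finite_univ (α := Prop)).prod
      ((Set.finite_univ (α := Option (α × Bool))).prod
        hL.finite_range_leftQuotient.finite_subsets)
    refine hprod.subset ?_
    rintro _ ⟨x, rfl⟩
    exact ⟨trivial, trivial, Set.image_subset_range _ _⟩
  apply Language.IsRegular.of_finite_range_leftQuotient
  rw [hquot, Set.range_comp]
  exact hsummary.image _

/-- Involutive NFA to DFA conversion: every involutive automaton over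
`α × Bool` can be replaced by a deterministic automaton accepting only freely
reduced words whose language has the same image in the free group. -/
theorem involutive_nfa_to_dfa {α σ : Type*} [Fintype α] [DecidableEq α]
    [Fintype σ] (N : NFA (α × Bool) σ)
    (hinv : ∀ (p q : σ) (a : α) (b : Bool),
      q ∈ N.step p (a, b) ↔ p ∈ N.step q (a, !b)) :
    ∃ (Q : Type) (_ : Fintype Q) (M : DFA (α × Bool) Q),
      (∀ w ∈ M.accepts, FreeGroup.reduce w = w) ∧
      FreeGroup.mk '' M.accepts = FreeGroup.mk '' N.accepts := by
  classical
  have hN : N.accepts.IsRegular :=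
    Language.isRegular_iff.mpr ⟨Set σ, inferInstance, N.toDFA, N.toDFA_correct⟩
  obtain ⟨Q, hQ, M, hM⟩ := hN.freeReduction
  refine ⟨Q, hQ, M, ?_, ?_⟩
  · rw [hM]
    exact fun w hw => Language.reduce_eq_of_mem_freeReduction hw
  · rw [hM, Language.mk_image_freeReduction]
end
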